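/- arXiv:1510.06181 — 7 statements merged into one kernel-verified Lean document; each statement's English description precedes it below -/
import Mathlib

section
/- Let R be an integral domain with fraction field K, let A be a finite flat R-algebra, and let F be a finite subset of A^K = K ⊗_R A. Then Gen_A(F) := {p ∈ Spec(R) : F ⊆ A_p}, where A_p denotes the image of the localization A_p in A^K, is a neighborhood of the generic point of Spec(R). If A is finitely presented as an R-module, then Gen_A(F) is an open subset of Spec(R). If moreover R is a Krull domain, then the complement Ex_A(F) := Spec(R) \ Gen_A(F) is either empty or pure of codimension one in Spec(R) with finitely many irreducible components. -/
open TensorProduct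

/-- An irreducible component of `s`: a maximal irreducible subset of `s`. -/
def IsIrredCompOf {X : Type*} [TopologicalSpace X] (C s : Set X) : Prop :=
  IsIrreducible C ∧ C ⊆ s ∧ ∀ C' : Set X, IsIrreducible C' → C' ⊆ s → C ⊆ C' → C' = C

/-- A closed subset of `Spec R` is pure of codimension one with finitely many irreducible
components. -/
def IsReducedWeilDivisor {R : Type*} [CommRing R] (s : Set (PrimeSpectrum R)) : Prop :=
  {C | IsIrredCompOf C s}.Finite ∧
    ∀ C, IsIrredCompOf C s → ∃ q : PrimeSpectrum R, closure C = closure {q} ∧ Order.height q = 1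

/-- A Krull domain: localizations at height-one primes are discrete valuation rings, `R` is the
intersection of these localizations inside its fraction field, and every nonzero element lies in
only finitely many height-one primes. -/
def IsKrullDomain (R : Type*) [CommRing R] [IsDomain R] : Prop :=
  (∀ p : PrimeSpectrum R, Order.height p = 1 →
    letI : IsDomain (Localization.AtPrime p.asIdeal) :=
      IsLocalization.isDomain_of_local_atPrime p.2
    IsDiscreteValuationRing (Localization.AtPrime p.asIdeal)) ∧
  (∀ x : FractionRing R,
    (∀ p : PrimeSpectrum R, Order.height p = 1 →
      ∃ (a : R) (s : R), s ∉ p.asIdeal ∧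
        algebraMap R (FractionRing R) s * x = algebraMap R (FractionRing R) a) →
    ∃ r : R, algebraMap R (FractionRing R) r = x) ∧
  (∀ r : R, r ≠ 0 → {p : PrimeSpectrum R | Order.height p = 1 ∧ r ∈ p.asIdeal}.Finite)

section BlockDefs
variable {B : Type*} [Ring B]
def IsBlockIdemOn (S : Set B) (e : B) : Prop :=
  e ∈ S ∧ IsIdempotentElem e ∧ e ≠ 0 ∧ (∀ x ∈ S, e * x = x * e) ∧
    ∀ f g : B, f ∈ S → g ∈ S → (∀ x ∈ S, f * x = x * f) → (∀ x ∈ S, g * x = x * g) →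
      IsIdempotentElem f → IsIdempotentElem g → f * g = 0 → f + g = e → f = 0 ∨ g = 0
def IsBlockIdem (e : B) : Prop := IsBlockIdemOn Set.univ e
end BlockDefs

/-- The subring `A_p ⊆ A^K`. -/
def localizedAt (R : Type*) [CommRing R] [IsDomain R] (A : Type*) [Ring A] [Algebra R A]
    (p : PrimeSpectrum R) : Set (FractionRing R ⊗[R] A) :=
  {x | ∃ (a : A) (s : R), s ∉ p.asIdeal ∧ s • x = Algebra.TensorProduct.includeRight a}

section Helpers

variable {R : Type*} [CommRing R] [IsDomain R] {A : Type*} [Ring A] [Algebra R A]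

/-- The ideal of denominators of `x`. -/
def denomIdeal (x : FractionRing R ⊗[R] A) : Ideal R :=
  (LinearMap.range (Algebra.TensorProduct.includeRight :
    A →ₐ[R] FractionRing R ⊗[R] A).toLinearMap).comap (LinearMap.toSpanSingleton R _ x)

lemma mem_denomIdeal (x : FractionRing R ⊗[R] A) (s : R) :
    s ∈ denomIdeal x ↔ ∃ a : A, s • x = Algebra.TensorProduct.includeRight a := by
  simp only [denomIdeal, Submodule.mem_comap, LinearMap.mem_range,
    LinearMap.toSpanSingleton_apply, AlgHom.toLinearMap_apply]
  exact ⟨fun ⟨a, h⟩ => ⟨a, h.symm⟩, fun ⟨a, h⟩ => ⟨a, h.symm⟩⟩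

lemma mem_localizedAt_iff (x : FractionRing R ⊗[R] A) (p : PrimeSpectrum R) :
    x ∈ localizedAt R A p ↔ ∃ s, s ∉ p.asIdeal ∧ s ∈ denomIdeal x := by
  simp only [mem_denomIdeal]
  exact ⟨fun ⟨a, s, hs, h⟩ => ⟨s, hs, a, h⟩, fun ⟨s, hs, a, h⟩ => ⟨a, s, hs, h⟩⟩

lemma isOpen_single (x : FractionRing R ⊗[R] A) :
    IsOpen {p : PrimeSpectrum R | x ∈ localizedAt R A p} := by
  have : {p : PrimeSpectrum R | x ∈ localizedAt R A p} =
      (PrimeSpectrum.zeroLocus (denomIdeal x : Set R))ᶜ := by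
    ext p
    simp only [Set.mem_setOf_eq, mem_localizedAt_iff, Set.mem_compl_iff,
      PrimeSpectrum.mem_zeroLocus, Set.not_subset, SetLike.mem_coe]
    exact ⟨fun ⟨s, h1, h2⟩ => ⟨s, h2, h1⟩, fun ⟨s, h1, h2⟩ => ⟨s, h2, h1⟩⟩
  rw [this]
  exact (PrimeSpectrum.isClosed_zeroLocus _).isOpen_compl

lemma isOpen_gen (F : Set (FractionRing R ⊗[R] A)) (hF : F.Finite) :
    IsOpen {p : PrimeSpectrum R | F ⊆ localizedAt R A p} := by
  have : {p : PrimeSpectrum R | F ⊆ localizedAt R A p} =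
      ⋂ x ∈ F, {p : PrimeSpectrum R | x ∈ localizedAt R A p} := by
    ext p
    simp [Set.subset_def]
  rw [this]
  exact hF.isOpen_biInter fun x _ => isOpen_single x

lemma exists_denom (x : FractionRing R ⊗[R] A) : ∃ b : R, b ≠ 0 ∧ b ∈ denomIdeal x := by
  induction x using TensorProduct.induction_on with
  | zero => exact ⟨1, one_ne_zero, (mem_denomIdeal _ _).2 ⟨0, by simp⟩⟩
  | tmul k a =>
    obtain ⟨r, s, hs, rfl⟩ := IsFractionRing.div_surjective (A := R) k
    have hs0 : s ≠ 0 := nonZeroDivisors.ne_zero hs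
    refine ⟨s, hs0, (mem_denomIdeal _ _).2 ⟨r • a, ?_⟩⟩
    have hs1 : algebraMap R (FractionRing R) s ≠ 0 := by
      simpa using hs0
    rw [TensorProduct.smul_tmul', Algebra.TensorProduct.includeRight_apply,
      TensorProduct.tmul_smul, TensorProduct.smul_tmul', Algebra.smul_def, Algebra.smul_def,
      mul_div_cancel₀ _ hs1, mul_one]
  | add x y hx hy =>
    obtain ⟨b, hb, hbx⟩ := hx
    obtain ⟨c, hc, hcy⟩ := hy
    refine ⟨b * c, mul_ne_zero hb hc, ?_⟩
    have h1 := Ideal.mul_mem_right c _ hbx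
    have h2 := Ideal.mul_mem_left _ b hcy
    rw [mem_denomIdeal] at *
    obtain ⟨a1, h1⟩ := h1
    obtain ⟨a2, h2⟩ := h2
    exact ⟨a1 + a2, by rw [smul_add, h1, h2, map_add]⟩

lemma global_of_local [Module.Finite R A] [Module.Projective R A] (hR : IsKrullDomain R)
    (y : FractionRing R ⊗[R] A)
    (hy : ∀ q : PrimeSpectrum R, Order.height q = 1 → y ∈ localizedAt R A q) :
    (1 : R) ∈ denomIdeal y := by
  obtain ⟨n, f, g, -, -, hfg⟩ := Module.Finite.exists_comp_eq_id_of_projective R A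
  let G : Fin n → (FractionRing R ⊗[R] A →ₗ[R] FractionRing R) := fun j =>
    (TensorProduct.rid R (FractionRing R)).toLinearMap ∘ₗ
      LinearMap.lTensor (FractionRing R) (LinearMap.proj j ∘ₗ g)
  have hG : ∀ j k a, G j (k ⊗ₜ a) = g a j • k := fun j k a => by simp [G]
  have hsum : ∀ z, z = ∑ j, G j z ⊗ₜ[R] f (Pi.single j 1) := by
    intro z
    induction z using TensorProduct.induction_on with
    | zero => simp
    | tmul k a =>
      simp only [hG, TensorProduct.smul_tmul]
      rw [← TensorProduct.tmul_sum]
      congr 1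
      have h1 : f (g a) = a := LinearMap.congr_fun hfg a
      conv_lhs => rw [← h1, pi_eq_sum_univ' (g a)]
      simp [map_sum]
      
    | add x y hx hy =>
      conv_lhs => rw [hx, hy]
      simp only [map_add, TensorProduct.add_tmul, Finset.sum_add_distrib]
  have hc : ∀ j, ∃ r : R, algebraMap R (FractionRing R) r = G j y := by
    intro j
    refine hR.2.1 _ fun q hq => ?_
    obtain ⟨a, s, hs, h⟩ := hy q hq
    refine ⟨g a j, s, hs, ?_⟩
    rw [← Algebra.smul_def, ← map_smul, h, Algebra.TensorProduct.includeRight_apply, hG,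
      Algebra.smul_def, mul_one]
  choose r hr using hc
  rw [mem_denomIdeal]
  refine ⟨∑ j, r j • f (Pi.single j 1), ?_⟩
  rw [one_smul, hsum y, map_sum]
  refine Finset.sum_congr rfl fun j _ => ?_
  rw [← hr, Algebra.TensorProduct.includeRight_apply, TensorProduct.tmul_smul,
    TensorProduct.smul_tmul', Algebra.smul_def, mul_one]

lemma exists_pow_dvd (hR : IsKrullDomain R) (q : PrimeSpectrum R) (hq : Order.height q = 1)
    (b s : R) (hb : b ≠ 0) (hs : s ∈ q.asIdeal) :
    ∃ (N : ℕ) (t c : R), t ∉ q.asIdeal ∧ t * s ^ N = b * c := by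
  have hdom : IsDomain (Localization.AtPrime q.asIdeal) :=
    IsLocalization.isDomain_of_local_atPrime q.2
  have hD : IsDiscreteValuationRing (Localization.AtPrime q.asIdeal) := hR.1 q hq
  have hinj : Function.Injective (algebraMap R (Localization.AtPrime q.asIdeal)) :=
    IsLocalization.injective _ q.asIdeal.primeCompl_le_nonZeroDivisors
  obtain ⟨w, hw⟩ := IsDiscreteValuationRing.exists_irreducible (Localization.AtPrime q.asIdeal)
  have hb' : algebraMap R (Localization.AtPrime q.asIdeal) b ≠ 0 := by
    rwa [Ne, map_eq_zero_iff _ hinj]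
  obtain ⟨N, hN⟩ := IsDiscreteValuationRing.associated_pow_irreducible hb' hw
  have hsm : algebraMap R (Localization.AtPrime q.asIdeal) s ∈
      IsLocalRing.maximalIdeal (Localization.AtPrime q.asIdeal) :=
    (IsLocalization.AtPrime.to_map_mem_maximal_iff _ q.asIdeal s).2 hs
  rw [hw.maximalIdeal_eq, Ideal.mem_span_singleton] at hsm
  obtain ⟨d, hd⟩ := hN.dvd.trans (pow_dvd_pow_of_dvd hsm N)
  obtain ⟨⟨c, t⟩, hct⟩ := IsLocalization.surj q.asIdeal.primeCompl d
  refine ⟨N, t, c, t.2, hinj ?_⟩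
  simp only [map_mul, map_pow]
  rw [hd, ← hct]
  ring

lemma exists_height_one [Module.Finite R A] [Module.Projective R A] (hR : IsKrullDomain R)
    (x : FractionRing R ⊗[R] A) (p : PrimeSpectrum R) (hx : x ∉ localizedAt R A p) :
    ∃ q : PrimeSpectrum R, Order.height q = 1 ∧ q ≤ p ∧ x ∉ localizedAt R A q := by
  by_contra! hcon
  apply hx
  obtain ⟨b, hb, hbx⟩ := exists_denom x
  let T : Set (PrimeSpectrum R) := {q | (Order.height q = 1 ∧ b ∈ q.asIdeal) ∧ ¬ q ≤ p}
  have hT : T.Finite := (hR.2.2 b hb).subset fun q hq => hq.1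
  have key : ∀ q : PrimeSpectrum R, ∃ u : R, u ∉ p.asIdeal ∧
      (q ∈ T → ∃ t, t ∉ q.asIdeal ∧ t * u ∈ denomIdeal x) := by
    intro q
    by_cases hq : q ∈ T
    · obtain ⟨s, hsq, hsp⟩ := Set.not_subset.1 hq.2
      obtain ⟨N, t, c, ht, h⟩ := exists_pow_dvd hR q hq.1.1 b s hb hsq
      refine ⟨s ^ N, fun h => hsp (p.2.mem_of_pow_mem _ h), fun _ => ⟨t, ht, ?_⟩⟩
      rw [h]
      exact Ideal.mul_mem_right _ _ hbx
    · exact ⟨1, p.2.one_notMem, fun h => absurd h hq⟩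
  choose u hup hu using key
  have hprod : ∏ q ∈ hT.toFinset, u q ∉ p.asIdeal := by
    rw [p.2.prod_mem_iff]
    rintro ⟨q, -, h⟩
    exact hup q h
  rw [mem_localizedAt_iff]
  refine ⟨_, hprod, ?_⟩
  set v := ∏ q ∈ hT.toFinset, u q with hv
  have hsmul : ∀ r, r * v ∈ denomIdeal x → r ∈ denomIdeal (v • x) := by
    intro r h
    rw [mem_denomIdeal] at *
    rwa [smul_smul]
  have := global_of_local hR (v • x) fun q hq => by
    rw [mem_localizedAt_iff]
    by_cases hbq : b ∈ q.asIdeal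
    · by_cases hqp : q ≤ p
      · obtain ⟨s, hs, h⟩ := (mem_localizedAt_iff _ _).1 (hcon q hq hqp)
        exact ⟨s, hs, hsmul _ (Ideal.mul_mem_right _ _ h)⟩
      · have hqT : q ∈ T := ⟨⟨hq, hbq⟩, hqp⟩
        obtain ⟨t, ht, h⟩ := hu q hqT
        refine ⟨t, ht, hsmul _ ?_⟩
        obtain ⟨w, hw⟩ := Finset.dvd_prod_of_mem u (hT.mem_toFinset.2 hqT)
        rw [hv, hw, ← mul_assoc]
        exact Ideal.mul_mem_right _ _ h
    · exact ⟨b, hbq, hsmul _ (Ideal.mul_mem_right _ _ hbx)⟩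
  rw [mem_denomIdeal] at *
  simpa using this

lemma weil [Module.Finite R A] [Module.Projective R A] (hR : IsKrullDomain R)
    (F : Set (FractionRing R ⊗[R] A)) (hF : F.Finite) :
    IsReducedWeilDivisor {p : PrimeSpectrum R | F ⊆ localizedAt R A p}ᶜ := by
  set E := {p : PrimeSpectrum R | F ⊆ localizedAt R A p}ᶜ with hE
  have hclosed : IsClosed E := (isOpen_gen F hF).isClosed_compl
  let T : Set (PrimeSpectrum R) := {q | Order.height q = 1 ∧ q ∈ E}
  have hT : T.Finite := by
    choose b hb hbx using fun x : FractionRing R ⊗[R] A => exists_denom x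
    refine (hF.biUnion fun x _ => hR.2.2 (b x) (hb x)).subset ?_
    rintro q ⟨hq, hqE⟩
    obtain ⟨x, hxF, hx⟩ := Set.not_subset.1 hqE
    simp only [Set.mem_iUnion]
    refine ⟨x, hxF, hq, ?_⟩
    by_contra hbq
    exact hx ((mem_localizedAt_iff _ _).2 ⟨_, hbq, hbx x⟩)
  have main : ∀ C, IsIrredCompOf C E → ∃ q ∈ T, C = closure {q} := by
    classical
    rintro C ⟨hC, hCE, hmax⟩
    obtain ⟨z, hz, hCz⟩ := isIrreducible_iff_sUnion_isClosed.1 hC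
      (hT.toFinset.image fun q => closure {q}) (by simp) (by
        intro p hp
        obtain ⟨x, hxF, hx⟩ := Set.not_subset.1 (hCE hp)
        obtain ⟨q, hq, hqp, hxq⟩ := exists_height_one hR x p hx
        refine Set.mem_sUnion.2 ⟨closure {q}, ?_, ?_⟩
        · simp only [Finset.coe_image, Set.Finite.coe_toFinset]
          exact ⟨q, ⟨hq, fun h => hxq (h hxF)⟩, rfl⟩
        · rw [← specializes_iff_mem_closure]
          exact (PrimeSpectrum.le_iff_specializes _ _).1 hqp)
    obtain ⟨q, hq, rfl⟩ := Finset.mem_image.1 hz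
    rw [Set.Finite.mem_toFinset] at hq
    refine ⟨q, hq, (hmax _ isIrreducible_singleton.closure ?_ hCz).symm⟩
    exact hclosed.closure_subset_iff.2 (Set.singleton_subset_iff.2 hq.2)
  refine ⟨(hT.image fun q => closure {q}).subset fun C hC => ?_, fun C hC => ?_⟩
  · obtain ⟨q, hq, rfl⟩ := main C hC
    exact ⟨q, hq, rfl⟩
  · obtain ⟨q, hq, rfl⟩ := main C hC
    exact ⟨q, closure_closure, hq.1⟩

end Helpers

variable (R : Type*) [CommRing R] [IsDomain R] (A : Type*) [Ring A] [Algebra R A]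

theorem stmt0 [Module.Finite R A] [Module.Flat R A]
    (F : Set (FractionRing R ⊗[R] A)) (hF : F.Finite) :
    {p : PrimeSpectrum R | F ⊆ localizedAt R A p} ∈
      nhds (⟨⊥, Ideal.bot_prime⟩ : PrimeSpectrum R) ∧
    (Module.FinitePresentation R A →
      IsOpen {p : PrimeSpectrum R | F ⊆ localizedAt R A p}) ∧
    (Module.FinitePresentation R A → IsKrullDomain R →
      {p : PrimeSpectrum R | F ⊆ localizedAt R A p}ᶜ = ∅ ∨
        IsReducedWeilDivisor {p : PrimeSpectrum R | F ⊆ localizedAt R A p}ᶜ) := by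
  refine ⟨(isOpen_gen F hF).mem_nhds fun x _ => ?_, fun _ => isOpen_gen F hF, fun _ hR => ?_⟩
  · obtain ⟨b, hb, hbx⟩ := exists_denom x
    exact (mem_localizedAt_iff _ _).2 ⟨b, by simpa using hb, hbx⟩
  · have : Module.Projective R A := Module.Flat.projective_of_finitePresentation
    exact Or.inr (weil hR F hF)
end

section
/- Let R be an integral domain with fraction field K and let A be a finite flat R-algebra that is finitely presented as an R-module. Then the map γ_A : Spec(R) → Part(Bl(A^K)) is lower semicontinuous: for every partition P in the image Γ_A of γ_A, the skeleton Γ_A^≤(P) := ⋃_{P' ≤ P} γ_A^{-1}(P') is closed in Spec(R); consequently each stratum Γ_A(P) := γ_A^{-1}(P) is open in Γ_A^≤(P), hence locally closed in Spec(R). -/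
open TensorProduct

/-- Two elements of `A^K` (typically block idempotents of `A^K`) lie in the same block of the
localization `A_p`, i.e. there is a block idempotent of `A_p` acting as the identity on both. -/
def inSameBlockAt (R : Type*) [CommRing R] [IsDomain R] (A : Type*) [Ring A] [Algebra R A]
    (p : PrimeSpectrum R) (c d : FractionRing R ⊗[R] A) : Prop :=
  ∃ e, IsBlockIdemOn (localizedAt R A p) e ∧ e * c = c ∧ e * d = d

section Helpers
variable {R : Type*} [CommRing R] [IsDomain R] {A : Type*} [Ring A] [Algebra R A]

/-- central idempotent of `A^K` lying in `A_p` -/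
def CI (p : PrimeSpectrum R) (f : FractionRing R ⊗[R] A) : Prop :=
  f ∈ localizedAt R A p ∧ IsIdempotentElem f ∧ ∀ x, f * x = x * f

lemma exists_denom_s1 (x : FractionRing R ⊗[R] A) :
    ∃ (s : R) (a : A), s ≠ 0 ∧ s • x = Algebra.TensorProduct.includeRight a := by
  induction x using TensorProduct.induction_on with
  | zero => exact ⟨1, 0, one_ne_zero, by simp⟩
  | tmul k a =>
    obtain ⟨⟨r, s⟩, h⟩ := IsLocalization.surj (nonZeroDivisors R) k
    refine ⟨s, r • a, nonZeroDivisors.ne_zero s.2, ?_⟩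
    simp only [Algebra.TensorProduct.includeRight_apply]
    rw [TensorProduct.smul_tmul', TensorProduct.tmul_smul, TensorProduct.smul_tmul',
      Algebra.smul_def, mul_comm, h, Algebra.smul_def, mul_one]
  | add x y hx hy =>
    obtain ⟨s, a, hs, ha⟩ := hx
    obtain ⟨t, b, ht, hb⟩ := hy
    refine ⟨s * t, t • a + s • b, mul_ne_zero hs ht, ?_⟩
    rw [map_add, map_smul, map_smul, ← ha, ← hb, smul_add, smul_smul, smul_smul, mul_comm s t]

lemma smul_cancel {s : R} (hs : s ≠ 0) {x y : FractionRing R ⊗[R] A} (h : s • x = s • y) :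
    x = y := by
  have hk : algebraMap R (FractionRing R) s ≠ 0 := by
    simpa using hs
  rw [← algebraMap_smul (FractionRing R) s x, ← algebraMap_smul (FractionRing R) s y] at h
  exact (smul_right_injective _ hk) h

lemma central_of {p : PrimeSpectrum R} {f : FractionRing R ⊗[R] A}
    (h : ∀ x ∈ localizedAt R A p, f * x = x * f) (x : FractionRing R ⊗[R] A) :
    f * x = x * f := by
  obtain ⟨s, a, hs, ha⟩ := exists_denom_s1 x
  have h1 := h (s • x) ⟨a, 1, (Ideal.ne_top_iff_one _).1 p.2.ne_top, by rw [one_smul, ha]⟩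
  rw [mul_smul_comm, smul_mul_assoc] at h1
  exact smul_cancel hs h1

lemma one_mem_loc (p : PrimeSpectrum R) : (1 : FractionRing R ⊗[R] A) ∈ localizedAt R A p :=
  ⟨1, 1, (Ideal.ne_top_iff_one _).1 p.2.ne_top, by rw [one_smul, map_one]⟩

lemma mul_mem_loc {p : PrimeSpectrum R} {x y : FractionRing R ⊗[R] A}
    (hx : x ∈ localizedAt R A p) (hy : y ∈ localizedAt R A p) : x * y ∈ localizedAt R A p := by
  obtain ⟨a, s, hs, ha⟩ := hx
  obtain ⟨b, t, ht, hb⟩ := hy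
  refine ⟨a * b, s * t, p.2.mul_notMem hs ht, ?_⟩
  rw [map_mul, ← ha, ← hb, smul_mul_smul_comm]

lemma sub_mem_loc {p : PrimeSpectrum R} {x y : FractionRing R ⊗[R] A}
    (hx : x ∈ localizedAt R A p) (hy : y ∈ localizedAt R A p) : x - y ∈ localizedAt R A p := by
  obtain ⟨a, s, hs, ha⟩ := hx
  obtain ⟨b, t, ht, hb⟩ := hy
  refine ⟨t • a - s • b, s * t, p.2.mul_notMem hs ht, ?_⟩
  rw [map_sub, map_smul, map_smul, ← ha, ← hb, smul_sub, smul_smul, smul_smul, mul_comm s t]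

lemma CI.one (p : PrimeSpectrum R) : CI p (1 : FractionRing R ⊗[R] A) :=
  ⟨one_mem_loc p, IsIdempotentElem.one, by simp⟩

lemma CI.compl {p : PrimeSpectrum R} {f : FractionRing R ⊗[R] A} (h : CI p f) : CI p (1 - f) :=
  ⟨sub_mem_loc (one_mem_loc p) h.1, h.2.1.one_sub, fun x => by
    rw [sub_mul, mul_sub, h.2.2 x, one_mul, mul_one]⟩

lemma CI.mul {p : PrimeSpectrum R} {f g : FractionRing R ⊗[R] A} (h : CI p f) (h' : CI p g) :
    CI p (f * g) :=
  ⟨mul_mem_loc h.1 h'.1, h.2.1.mul_of_commute (h.2.2 g) h'.2.1, fun x => by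
    rw [mul_assoc, h'.2.2, ← mul_assoc, h.2.2, mul_assoc]⟩

lemma isOpen_CI (f : FractionRing R ⊗[R] A) : IsOpen {q : PrimeSpectrum R | CI q f} := by
  rw [isOpen_iff_forall_mem_open]
  rintro q ⟨⟨a, s, hs, ha⟩, h⟩
  exact ⟨PrimeSpectrum.basicOpen s, fun q' hq' => ⟨⟨a, s, hq', ha⟩, h⟩,
    (PrimeSpectrum.basicOpen s).2, hs⟩

lemma finite_idem_of_artinian (Z : Type*) [CommRing Z] [IsArtinianRing Z] :
    Finite {e : Z // IsIdempotentElem e} := by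
  have : Finite (TopologicalSpace.Clopens (PrimeSpectrum Z)) :=
    Finite.of_injective (fun s => (s : Set (PrimeSpectrum Z))) SetLike.coe_injective
  exact Finite.of_equiv (TopologicalSpace.Clopens (PrimeSpectrum Z))
    PrimeSpectrum.isIdempotentElemEquivClopens.toEquiv.symm

lemma finite_central_idem [Module.Finite R A] :
    {f : FractionRing R ⊗[R] A | IsIdempotentElem f ∧ ∀ x, f * x = x * f}.Finite := by
  let K := FractionRing R
  let Z := Subalgebra.center K (K ⊗[R] A)
  have : Module.Finite K Z := inferInstanceAs (Module.Finite K Z.toSubmodule)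
  have : IsArtinianRing Z := IsArtinianRing.of_finite K Z
  have : Finite {e : Z // IsIdempotentElem e} := finite_idem_of_artinian Z
  refine (Set.finite_range (fun e : {e : Z // IsIdempotentElem e} => (e.1 : K ⊗[R] A))).subset ?_
  rintro f ⟨h1, h2⟩
  exact ⟨⟨⟨f, Subalgebra.mem_center_iff.2 fun x => (h2 x).symm⟩, Subtype.ext h1⟩, rfl⟩

/-- a block is either fixed or killed -/
lemma block_dichotomy {p : PrimeSpectrum R} {S : Set (FractionRing R ⊗[R] A)}
    {c f : FractionRing R ⊗[R] A}
    (hS : ∀ g, CI p g → c ∈ S → g * c ∈ S)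
    (hcent : ∀ x, c * x = x * c)
    (hc : IsBlockIdemOn S c) (hf : CI p f) : f * c = 0 ∨ f * c = c := by
  have key : ∀ g, CI p g → (∀ x ∈ S, g * c * x = x * (g * c)) ∧ IsIdempotentElem (g * c) := by
    intro g hg
    refine ⟨fun x _ => ?_, hg.2.1.mul_of_commute (hg.2.2 c) hc.2.1⟩
    rw [mul_assoc, hcent, ← mul_assoc, hg.2.2, mul_assoc]
  have h0 : (f * c) * ((1 - f) * c) = 0 := by
    have : f * (1 - f) = 0 := by rw [mul_sub, mul_one, hf.2.1.eq, sub_self]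
    rw [mul_assoc, ← mul_assoc c, hcent, mul_assoc (1 - f), ← mul_assoc, this, zero_mul]
  rcases hc.2.2.2.2 (f * c) ((1 - f) * c) (hS f hf hc.1) (hS _ hf.compl hc.1) (key f hf).1
    (key _ hf.compl).1 (key f hf).2 (key _ hf.compl).2 h0 (by rw [← add_mul]; simp) with h | h
  · exact Or.inl h
  · right
    rw [sub_mul, one_mul, sub_eq_zero] at h
    exact h.symm

lemma exists_min [Module.Finite R A] (p : PrimeSpectrum R) (c : FractionRing R ⊗[R] A) :
    ∃ e, CI p e ∧ e * c = c ∧ ∀ f, CI p f → f * c = c → e * f = e := by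
  have hfin : {f : FractionRing R ⊗[R] A | CI p f ∧ f * c = c}.Finite :=
    finite_central_idem.subset fun f hf => hf.1.2
  suffices H : ∀ T : Set (FractionRing R ⊗[R] A), T.Finite → (∀ f ∈ T, CI p f ∧ f * c = c) →
      ∃ e, CI p e ∧ e * c = c ∧ ∀ f ∈ T, e * f = e by
    obtain ⟨e, h1, h2, h3⟩ := H _ hfin (fun f hf => hf)
    exact ⟨e, h1, h2, fun f hf hfc => h3 f ⟨hf, hfc⟩⟩
  intro T hT
  induction T, hT using Set.Finite.induction_on with
  | empty => exact fun _ => ⟨1, CI.one p, one_mul c, by simp⟩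
  | insert _ _ ih =>
    rename_i f T _ _
    intro h
    obtain ⟨e, h1, h2, h3⟩ := ih fun g hg => h g (Set.mem_insert_of_mem _ hg)
    obtain ⟨hf, hfc⟩ := h f (Set.mem_insert _ _)
    refine ⟨f * e, hf.mul h1, by rw [mul_assoc, h2, hfc], ?_⟩
    rintro g (rfl | hg)
    · rw [mul_assoc, ← hf.2.2 e, ← mul_assoc, hf.2.1.eq]
    · rw [mul_assoc, h3 g hg]

lemma same_iff [Module.Finite R A] (p : PrimeSpectrum R) {c d : FractionRing R ⊗[R] A}
    (hc : IsBlockIdem c) :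
    inSameBlockAt R A p c d ↔ ∀ f, CI p f → f * c = c → f * d = d := by
  constructor
  · rintro ⟨e, he, hec, hed⟩ f hf hfc
    rcases block_dichotomy (fun g hg h => mul_mem_loc hg.1 h) (central_of he.2.2.2.1) he hf
      with h | h
    · exfalso
      apply hc.2.2.1
      rw [← hfc, ← hec, ← mul_assoc, h, zero_mul]
    · rw [← hed, ← mul_assoc, h]
  · intro H
    obtain ⟨e, he, hec, hmin⟩ := exists_min p c
    refine ⟨e, ⟨he.1, he.2.1, ?_, fun x _ => he.2.2 x, ?_⟩, hec, H e he hec⟩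
    · rintro rfl
      exact hc.2.2.1 (by rw [← hec, zero_mul])
    · intro f g hf hg hfc hgc hfi hgi hfg hsum
      have hF : CI p f := ⟨hf, hfi, central_of hfc⟩
      have hG : CI p g := ⟨hg, hgi, central_of hgc⟩
      have hgf : g * f = 0 := by rw [hG.2.2, hfg]
      rcases block_dichotomy (p := p) (fun _ _ _ => Set.mem_univ _)
        (fun x => hc.2.2.2.1 x (Set.mem_univ _)) hc hF with h | h
      · left
        have hgc' : g * c = c := by
          rw [← hsum, add_mul, h, zero_add] at hec
          exact hec
        have := hmin g hG hgc'
        rw [← hsum, add_mul, hfg, hgi.eq, zero_add] at this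
        simpa using this
      · right
        have := hmin f hF h
        rw [← hsum, add_mul, hgf, hfi.eq, add_zero] at this
        simpa using this

end Helpers

variable (R : Type*) [CommRing R] [IsDomain R] (A : Type*) [Ring A] [Algebra R A]

/-- **Lower semicontinuity of the local block structure** (Theorem `block_stratification_thm`).
For `P = γ_A(p₀)` a local block structure of `A`, the skeleton
`Γ_A^≤(P) = {q | γ_A(q) ≤ γ_A(p₀)}` is closed, and the stratum
`Γ_A(P) = {q | γ_A(q) = γ_A(p₀)}` is open in the skeleton, hence locally closed. -/
theorem stmt1 [Module.Finite R A] [Module.Flat R A] [Module.FinitePresentation R A]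
    (p₀ : PrimeSpectrum R) :
    IsClosed {q : PrimeSpectrum R | ∀ c d : FractionRing R ⊗[R] A,
        IsBlockIdem c → IsBlockIdem d → inSameBlockAt R A p₀ c d → inSameBlockAt R A q c d} ∧
    (∃ U : Set (PrimeSpectrum R), IsOpen U ∧
      {q : PrimeSpectrum R | ∀ c d : FractionRing R ⊗[R] A,
        IsBlockIdem c → IsBlockIdem d → (inSameBlockAt R A p₀ c d ↔ inSameBlockAt R A q c d)} =
      U ∩ {q : PrimeSpectrum R | ∀ c d : FractionRing R ⊗[R] A,
        IsBlockIdem c → IsBlockIdem d → inSameBlockAt R A p₀ c d → inSameBlockAt R A q c d}) ∧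
    IsLocallyClosed {q : PrimeSpectrum R | ∀ c d : FractionRing R ⊗[R] A,
        IsBlockIdem c → IsBlockIdem d →
          (inSameBlockAt R A p₀ c d ↔ inSameBlockAt R A q c d)} := by
  have hclosed : IsClosed {q : PrimeSpectrum R | ∀ c d : FractionRing R ⊗[R] A,
        IsBlockIdem c → IsBlockIdem d → inSameBlockAt R A p₀ c d → inSameBlockAt R A q c d} := by
    simp only [Set.ofPred_forall]
    refine isClosed_iInter fun c => isClosed_iInter fun d => isClosed_iInter fun hc =>
      isClosed_iInter fun hd => isClosed_iInter fun _ => ?_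
    simp only [same_iff _ hc, Set.ofPred_forall]
    refine isClosed_iInter fun f => ?_
    have : (fun q : PrimeSpectrum R => CI q f → f * c = c → f * d = d) =
      fun q => ¬ (q ∈ {q : PrimeSpectrum R | CI q f}) ∨ (f * c = c → f * d = d) := by
      ext q; exact imp_iff_not_or
    simp only [this]
    exact (isOpen_CI f).isClosed_compl.union isClosed_const
  have hopen : ∃ U : Set (PrimeSpectrum R), IsOpen U ∧
      {q : PrimeSpectrum R | ∀ c d : FractionRing R ⊗[R] A,
        IsBlockIdem c → IsBlockIdem d → (inSameBlockAt R A p₀ c d ↔ inSameBlockAt R A q c d)} =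
      U ∩ {q : PrimeSpectrum R | ∀ c d : FractionRing R ⊗[R] A,
        IsBlockIdem c → IsBlockIdem d → inSameBlockAt R A p₀ c d → inSameBlockAt R A q c d} := by
    have hfin : {c : FractionRing R ⊗[R] A | IsBlockIdem c}.Finite :=
      finite_central_idem.subset fun c hc => ⟨hc.2.1, fun x => hc.2.2.2.1 x (Set.mem_univ x)⟩
    refine ⟨⋂ c ∈ {c : FractionRing R ⊗[R] A | IsBlockIdem c},
      ⋂ d ∈ {c : FractionRing R ⊗[R] A | IsBlockIdem c},
      {q | inSameBlockAt R A q c d → inSameBlockAt R A p₀ c d}, ?_, ?_⟩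
    · refine hfin.isOpen_biInter fun c hc => hfin.isOpen_biInter fun d hd => ?_
      by_cases h : inSameBlockAt R A p₀ c d
      · simp [h]
      · have : {q | inSameBlockAt R A q c d → inSameBlockAt R A p₀ c d} =
            ⋃ f ∈ {f : FractionRing R ⊗[R] A | f * c = c ∧ f * d ≠ d},
              {q : PrimeSpectrum R | CI q f} := by
          ext q
          simp only [h, Set.mem_ofPred_eq, same_iff q hc, Set.mem_iUnion, imp_false, not_forall]
          constructor
          · rintro ⟨f, h1, h2, h3⟩
            exact ⟨f, ⟨h2, h3⟩, h1⟩
          · rintro ⟨f, ⟨h2, h3⟩, h1⟩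
            exact ⟨f, h1, h2, h3⟩
        rw [this]
        exact isOpen_biUnion fun f _ => isOpen_CI f
    · ext q
      simp only [Set.mem_ofPred_eq, Set.mem_inter_iff, Set.mem_iInter]
      exact ⟨fun H => ⟨fun c hc d hd => (H c d hc hd).2, fun c d hc hd => (H c d hc hd).1⟩,
        fun H c d hc hd => ⟨H.2 c d hc hd, H.1 c hc d hd⟩⟩
  refine ⟨hclosed, hopen, ?_⟩
  obtain ⟨U, hU, h⟩ := hopen
  exact ⟨U, _, hU, hclosed, h⟩
end

section
/- Let R be an integral domain with fraction field K and let A be a finite flat R-algebra that is finitely presented as an R-module, with A^K ≠ 0, and let (c_i)_{i∈I} be the block idempotents of A^K. For any two distinct indices i, j ∈ I, the gluing locus Γ_A^≤({i,j}) := {p ∈ Spec(R) : c_i and c_j lie in the same block of A_p} is a closed subset of Spec(R). -/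
open TensorProduct

section Helpers
variable {R : Type*} [CommRing R] [IsDomain R] {A : Type*} [Ring A] [Algebra R A]
  {p : PrimeSpectrum R}

theorem loc_incl (a : A) :
    (Algebra.TensorProduct.includeRight a : FractionRing R ⊗[R] A) ∈ localizedAt R A p :=
  ⟨a, 1, fun h => p.2.ne_top ((Ideal.eq_top_iff_one _).2 h), one_smul _ _⟩

theorem loc_one : (1 : FractionRing R ⊗[R] A) ∈ localizedAt R A p := by
  have := loc_incl (R := R) (p := p) (1 : A)
  rwa [map_one] at this

theorem loc_mul {x y : FractionRing R ⊗[R] A} (hx : x ∈ localizedAt R A p)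
    (hy : y ∈ localizedAt R A p) : x * y ∈ localizedAt R A p := by
  obtain ⟨a, s, hs, h1⟩ := hx
  obtain ⟨b, t, ht, h2⟩ := hy
  refine ⟨a * b, s * t, fun h => (p.2.mem_or_mem h).elim hs ht, ?_⟩
  rw [map_mul, ← h1, ← h2, smul_mul_smul_comm]

theorem loc_sub {x y : FractionRing R ⊗[R] A} (hx : x ∈ localizedAt R A p)
    (hy : y ∈ localizedAt R A p) : x - y ∈ localizedAt R A p := by
  obtain ⟨a, s, hs, h1⟩ := hx
  obtain ⟨b, t, ht, h2⟩ := hy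
  refine ⟨t • a - s • b, s * t, fun h => (p.2.mem_or_mem h).elim hs ht, ?_⟩
  rw [map_sub, map_smul, map_smul, ← h1, ← h2, smul_sub, smul_smul, smul_smul, mul_comm t s]

theorem loc_central {f : FractionRing R ⊗[R] A} (hf : ∀ x ∈ localizedAt R A p, f * x = x * f)
    (x : FractionRing R ⊗[R] A) : f * x = x * f := by
  induction x using TensorProduct.induction_on with
  | zero => simp
  | add x y hx hy => rw [mul_add, add_mul, hx, hy]
  | tmul k a =>
    have h := hf _ (loc_incl a)
    have e : k ⊗ₜ[R] a = k • (Algebra.TensorProduct.includeRight a : FractionRing R ⊗[R] A) := by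
      simp [TensorProduct.smul_tmul']
    rw [e, mul_smul_comm, smul_mul_assoc, h]

theorem block_split {B : Type*} [Ring B] {S : Set B} {e f : B} (he : IsBlockIdemOn S e)
    (hS : ∀ x ∈ S, ∀ y ∈ S, x * y ∈ S) (hS' : ∀ x ∈ S, ∀ y ∈ S, x - y ∈ S)
    (hfS : f ∈ S) (hfc : ∀ x ∈ S, f * x = x * f) (hf : IsIdempotentElem f) :
    f * e = 0 ∨ f * e = e := by
  obtain ⟨heS, hei, -, hec, hp⟩ := he
  have hfe : f * e * (f * e) = f * e := by
    rw [mul_assoc, ← mul_assoc e, ← hfc e heS, mul_assoc f e e, hei.eq, ← mul_assoc, hf.eq]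
  have h1 : f * e * e = f * e := by rw [mul_assoc, hei.eq]
  have h2 : e * (f * e) = f * e := by rw [← mul_assoc, ← hfc e heS, h1]
  have hcen : ∀ x ∈ S, f * e * x = x * (f * e) := fun x hx => by
    rw [mul_assoc, hec x hx, ← mul_assoc, hfc x hx, mul_assoc]
  have := hp (f * e) (e - f * e) (hS _ hfS _ heS) (hS' _ heS _ (hS _ hfS _ heS)) hcen
    (fun x hx => by rw [sub_mul, mul_sub, hcen x hx, hec x hx]) hfe
    (by
      change (e - f * e) * (e - f * e) = _
      rw [sub_mul, mul_sub, mul_sub, hfe, h1, h2, hei.eq, sub_self, sub_zero])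
    (by rw [mul_sub, hfe, h1, sub_self]) (by abel)
  exact this.imp id fun h => (sub_eq_zero.1 h).symm

theorem exists_block [Module.Finite R A] {c : FractionRing R ⊗[R] A} (hc : IsBlockIdem c) :
    ∃ e, IsBlockIdemOn (localizedAt R A p) e ∧ e * c = c := by
  let E : Set (FractionRing R ⊗[R] A) := {f | f ∈ localizedAt R A p ∧
    (∀ x ∈ localizedAt R A p, f * x = x * f) ∧ IsIdempotentElem f ∧ f * c = c}
  let φ : FractionRing R ⊗[R] A → Submodule (FractionRing R) (FractionRing R ⊗[R] A) :=
    fun f => LinearMap.range (LinearMap.mulLeft (FractionRing R) f)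
  have hE : E.Nonempty := ⟨1, loc_one, by simp, IsIdempotentElem.one, one_mul _⟩
  have wf : WellFounded (fun x y => φ x < φ y) := InvImage.wf φ wellFounded_lt
  obtain ⟨e, ⟨heS, hec, hei, hecc⟩, hmin⟩ := wf.has_min E hE
  have hc0 : c ≠ 0 := hc.2.2.1
  have key : ∀ f g, f ∈ localizedAt R A p → (∀ x ∈ localizedAt R A p, f * x = x * f) →
      IsIdempotentElem f → f * g = 0 → f + g = e → f * c = c → g = 0 := by
    intro f g hfS hfc hf hfg hsum hfcc
    have hfe : f * e = f := by rw [← hsum, mul_add, hf.eq, hfg, add_zero]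
    have hle : φ f ≤ φ e := by
      rintro _ ⟨x, rfl⟩
      refine ⟨f * x, ?_⟩
      simp only [LinearMap.mulLeft_apply]
      rw [← mul_assoc, ← hfc e heS, hfe]
    have hnlt := hmin f ⟨hfS, hfc, hf, hfcc⟩
    have heq : φ f = φ e := hle.eq_of_not_lt hnlt
    have : e ∈ φ f := heq ▸ ⟨1, by simp⟩
    obtain ⟨x, hx⟩ := this
    simp only [LinearMap.mulLeft_apply] at hx
    have h3 : f * e = e := by rw [← hx, ← mul_assoc, hf.eq]
    have h4 : f = e := hfe.symm.trans h3
    rw [h4] at hsum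
    simpa using hsum
  refine ⟨e, ⟨heS, hei, ?_, hec, ?_⟩, hecc⟩
  · rintro rfl
    exact hc0 (by rw [← hecc, zero_mul])
  · intro f g hfS hgS hfc hgc hf hg hfg hsum
    rcases block_split hc (fun _ _ _ _ => trivial) (fun _ _ _ _ => trivial) trivial
      (fun x _ => loc_central hfc x) hf with h | h
    · left
      have hgcc : g * c = c := by
        rw [← hsum, add_mul, h, zero_add] at hecc
        exact hecc
      exact key g f hgS hgc hg (by rw [hgc f hfS, hfg]) (by rw [add_comm, hsum]) hgcc
    · right
      exact key f g hfS hfc hf hfg hsum h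

end Helpers

variable (R : Type*) [CommRing R] [IsDomain R] (A : Type*) [Ring A] [Algebra R A]

/-- **Closedness of gluing loci.** For two distinct block idempotents `c, d` of the generic fiber
`A^K`, the locus of primes `p` where `c` and `d` lie in the same block of `A_p` is closed. -/
theorem stmt3 [Module.Finite R A] [Module.Flat R A] [Module.FinitePresentation R A]
    [Nontrivial (FractionRing R ⊗[R] A)]
    (c d : FractionRing R ⊗[R] A) (hc : IsBlockIdem c) (hd : IsBlockIdem d) (hcd : c ≠ d) :
    IsClosed {p : PrimeSpectrum R | inSameBlockAt R A p c d} := by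
  rw [← isOpen_compl_iff, isOpen_iff_forall_mem_open]
  intro p hp
  obtain ⟨e, he, hec⟩ := exists_block (p := p) hc
  have hcen := loc_central he.2.2.2.1
  have hed : e * d = 0 := by
    rcases block_split hd (fun _ _ _ _ => trivial) (fun _ _ _ _ => trivial) trivial
      (fun x _ => hcen x) he.2.1 with h | h
    · exact h
    · exact absurd ⟨e, he, hec, h⟩ hp
  obtain ⟨a, s, hs, has⟩ := he.1
  refine ⟨PrimeSpectrum.basicOpen s, ?_, (PrimeSpectrum.basicOpen s).2, hs⟩
  rintro q hq ⟨f, hf, hfc, hfd⟩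
  rcases block_split hf (fun _ hx _ hy => loc_mul hx hy) (fun _ hx _ hy => loc_sub hx hy)
      (f := e) ⟨a, s, hq, has⟩ (fun x _ => hcen x) he.2.1 with h | h
  · apply hc.2.2.1
    rw [← hec, ← hfc, ← mul_assoc, h, zero_mul]
  · apply hd.2.2.1
    rw [← hfd, ← h, hcen f, mul_assoc, hed, mul_zero]
end

section
/- Let A be a ring with center Z such that Z is noetherian and A is finitely generated as a Z-module. Let 𝔷 be a two-sided ideal of A generated by central elements such that the quotient ring A/𝔷 has classical Krull dimension zero, i.e., there are no strict inclusions between prime two-sided ideals of A/𝔷. Then the inclusion of the central subring (Z + 𝔷)/𝔷 into A/𝔷 is block bijective; in other words, every centrally-primitive idempotent of A/𝔷 is the image of an element of Z. -/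
section BlockDefs
variable {B : Type*} [Ring B]

/-- A two-sided ideal `P` is prime if `P ≠ A` and `IJ ⊆ P` implies `I ⊆ P` or `J ⊆ P` for all
two-sided ideals `I, J`. -/
def TwoSidedIdeal.IsPrimeIdeal (P : TwoSidedIdeal B) : Prop :=
  P ≠ ⊤ ∧ ∀ I J : TwoSidedIdeal B, (∀ x ∈ I, ∀ y ∈ J, x * y ∈ P) → I ≤ P ∨ J ≤ P

end BlockDefs

section Helpers
variable {A : Type*} [Ring A]

lemma aux_central (c : Subalgebra.center ℤ A) (x : A) : (c : A) * x = x * c :=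
  ((Subalgebra.mem_center_iff.1 c.2) x).symm

lemma aux_mul_left (I : Ideal (Subalgebra.center ℤ A)) (y x : A)
    (hx : x ∈ I • (⊤ : Submodule (Subalgebra.center ℤ A) A)) :
    y * x ∈ I • (⊤ : Submodule (Subalgebra.center ℤ A) A) := by
  induction hx using Submodule.smul_induction_on' with
  | smul c hc b hb =>
    have : y * (c • b) = c • (y * b) := by
      rw [Subalgebra.smul_def, Subalgebra.smul_def, smul_eq_mul, smul_eq_mul, ← mul_assoc,
        ← aux_central, mul_assoc]
    rw [this]
    exact Submodule.smul_mem_smul hc trivial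
  | add a ha b hb h1 h2 => rw [mul_add]; exact add_mem h1 h2

lemma aux_mul_right (I : Ideal (Subalgebra.center ℤ A)) (y x : A)
    (hx : x ∈ I • (⊤ : Submodule (Subalgebra.center ℤ A) A)) :
    x * y ∈ I • (⊤ : Submodule (Subalgebra.center ℤ A) A) := by
  induction hx using Submodule.smul_induction_on' with
  | smul c hc b hb =>
    have : (c • b) * y = c • (b * y) := by
      rw [Subalgebra.smul_def, Subalgebra.smul_def, smul_eq_mul, smul_eq_mul, mul_assoc]
    rw [this]
    exact Submodule.smul_mem_smul hc trivial
  | add a ha b hb h1 h2 => rw [add_mul]; exact add_mem h1 h2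

/-- If `u b v ∈ L A` for all `b`, then `u y v ∈ K L A` for `y ∈ K A`. -/
lemma aux_sandwich (K L : Ideal (Subalgebra.center ℤ A)) (u v y : A)
    (h : ∀ b, u * b * v ∈ L • (⊤ : Submodule (Subalgebra.center ℤ A) A))
    (hy : y ∈ K • (⊤ : Submodule (Subalgebra.center ℤ A) A)) :
    u * y * v ∈ (K * L) • (⊤ : Submodule (Subalgebra.center ℤ A) A) := by
  induction hy using Submodule.smul_induction_on' with
  | smul c hc b hb =>
    have : u * (c • b) * v = c • (u * b * v) := by
      rw [Subalgebra.smul_def, Subalgebra.smul_def, smul_eq_mul, smul_eq_mul, ← mul_assoc,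
        ← aux_central, mul_assoc, mul_assoc, mul_assoc]
    rw [this, Submodule.mul_smul]
    exact Submodule.smul_mem_smul hc (h b)
  | add a ha b hb h1 h2 => rw [mul_add, add_mul]; exact add_mem h1 h2

lemma aux_mul_mem (K L : Ideal (Subalgebra.center ℤ A)) (x y : A)
    (hx : x ∈ K • (⊤ : Submodule (Subalgebra.center ℤ A) A))
    (hy : y ∈ L • (⊤ : Submodule (Subalgebra.center ℤ A) A)) :
    x * y ∈ (K * L) • (⊤ : Submodule (Subalgebra.center ℤ A) A) := by
  have := aux_sandwich K L 1 y x (fun b => aux_mul_left L _ _ hy) hx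
  simpa using this

lemma aux_lift (I : Ideal (Subalgebra.center ℤ A)) (a : A)
    (h1 : a * a - a ∈ I • (⊤ : Submodule (Subalgebra.center ℤ A) A))
    (h2 : ∀ x, a * x - x * a ∈ I • (⊤ : Submodule (Subalgebra.center ℤ A) A)) (n : ℕ) :
    ∃ b : A, b - a ∈ I • (⊤ : Submodule (Subalgebra.center ℤ A) A) ∧
      b * b - b ∈ I ^ (n + 1) • (⊤ : Submodule (Subalgebra.center ℤ A) A) ∧
      ∀ x, b * x - x * b ∈ I ^ (n + 1) • (⊤ : Submodule (Subalgebra.center ℤ A) A) := by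
  induction n with
  | zero => exact ⟨a, by simp, by simpa using h1, by simpa using h2⟩
  | succ n ih =>
    obtain ⟨b, hba, hbb, hbx⟩ := ih
    have hle : I ^ (n + 1) * I ^ (n + 1) ≤ I ^ (n + 1 + 1) := by
      rw [← pow_add]; exact Ideal.pow_le_pow_right (by omega)
    have hle' : (I ^ (n + 1) * I ^ (n + 1)) • (⊤ : Submodule (Subalgebra.center ℤ A) A) ≤
      I ^ (n + 1 + 1) • (⊤ : Submodule (Subalgebra.center ℤ A) A) :=
      Submodule.smul_mono_left hle
    have hle1 : I ^ (n + 1) • (⊤ : Submodule (Subalgebra.center ℤ A) A) ≤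
      I • (⊤ : Submodule (Subalgebra.center ℤ A) A) :=
      Submodule.smul_mono_left (Ideal.pow_le_self (by omega))
    obtain ⟨t, ht⟩ : ∃ t, t = b * b - b := ⟨_, rfl⟩
    rw [← ht] at hbb
    obtain ⟨c, hc⟩ : ∃ c, c = 3 * (b * b) - 2 * (b * b * b) := ⟨_, rfl⟩
    have hcb : c - b = (1 - 2 * b) * t := by rw [hc, ht]; noncomm_ring
    have hcbn : c - b ∈ I ^ (n + 1) • (⊤ : Submodule (Subalgebra.center ℤ A) A) := by
      rw [hcb]; exact aux_mul_left _ _ _ hbb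
    have hcc : c * c - c ∈ I ^ (n + 1 + 1) • (⊤ : Submodule (Subalgebra.center ℤ A) A) := by
      have : c * c - c = (4 * (b * b) - 4 * b - 3) * (t * t) := by
        rw [hc, ht]; noncomm_ring
      rw [this]
      exact aux_mul_left _ _ _ (hle' (aux_mul_mem _ _ _ _ hbb hbb))
    have hcx : ∀ x, c * x - x * c ∈ I ^ (n + 1) • (⊤ : Submodule (Subalgebra.center ℤ A) A) := by
      intro x
      have : c * x - x * c = (b * x - x * b) + ((c - b) * x - x * (c - b)) := by noncomm_ring
      rw [this]
      exact add_mem (hbx x) (sub_mem (aux_mul_right _ _ _ hcbn) (aux_mul_left _ _ _ hcbn))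
    have hccn : c * c - c ∈ I ^ (n + 1) • (⊤ : Submodule (Subalgebra.center ℤ A) A) :=
      Submodule.smul_mono_left (Ideal.pow_le_pow_right (by omega)) hcc
    have hy1 : ∀ x, c * x * (1 - c) ∈
        I ^ (n + 1) • (⊤ : Submodule (Subalgebra.center ℤ A) A) := by
      intro x
      have : c * x * (1 - c) = (c * x - x * c) * (1 - c) - x * (c * c - c) := by noncomm_ring
      rw [this]
      exact sub_mem (aux_mul_right _ _ _ (hcx x)) (aux_mul_left _ _ _ hccn)
    have hy2 : ∀ x, (1 - c) * x * c ∈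
        I ^ (n + 1) • (⊤ : Submodule (Subalgebra.center ℤ A) A) := by
      intro x
      have : (1 - c) * x * c = -((1 - c) * (c * x - x * c)) - (c * c - c) * x := by noncomm_ring
      rw [this]
      exact sub_mem (neg_mem (aux_mul_left _ _ _ (hcx x))) (aux_mul_right _ _ _ hccn)
    refine ⟨c, ?_, hcc, ?_⟩
    · have : c - a = (c - b) + (b - a) := by abel
      rw [this]; exact add_mem (hle1 hcbn) hba
    · intro x
      have e1 := hle' (aux_sandwich _ _ c (1 - c) _ hy1 (hy1 x))
      have e2 := hle' (aux_sandwich _ _ (1 - c) c _ hy2 (hy2 x))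
      have : c * x - x * c = (c * (c * x * (1 - c)) * (1 - c)
            - (c * c - c) * (x * (1 - c) * (1 - c)) - c * x * (c * c - c))
          - ((1 - c) * ((1 - c) * x * c) * c
            - (c * c - c) * (x * c * c) - (1 - c) * x * (c * c - c)) := by
        noncomm_ring
      rw [this]
      refine sub_mem (sub_mem (sub_mem e1 ?_) ?_) (sub_mem (sub_mem e2 ?_) ?_)
      · exact aux_mul_right _ _ _ hcc
      · exact aux_mul_left _ _ _ hcc
      · exact aux_mul_right _ _ _ hcc
      · exact aux_mul_left _ _ _ hcc

lemma aux_pi {ι : Type*} [Fintype ι] (K : Ideal (Subalgebra.center ℤ A)) (f : ι → A)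
    (h : ∀ i, f i ∈ K • (⊤ : Submodule (Subalgebra.center ℤ A) A)) :
    f ∈ K • (⊤ : Submodule (Subalgebra.center ℤ A) (ι → A)) := by
  classical
  rw [← Finset.univ_sum_single f]
  refine Submodule.sum_mem _ fun i _ => ?_
  have h1 : LinearMap.single (Subalgebra.center ℤ A) (fun _ : ι => A) i (f i) ∈
      Submodule.map (LinearMap.single (Subalgebra.center ℤ A) (fun _ : ι => A) i)
        (K • (⊤ : Submodule (Subalgebra.center ℤ A) A)) := Submodule.mem_map_of_mem (h i)
  rw [Submodule.map_smul''] at h1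
  exact Submodule.smul_mono le_rfl le_top h1

def auxComm {ι : Type*} (s : ι → A) : A →ₗ[Subalgebra.center ℤ A] (ι → A) where
  toFun a := fun i => a * s i - s i * a
  map_add' a b := by ext i; simp only [Pi.add_apply]; noncomm_ring
  map_smul' c a := by
    ext i
    simp only [Pi.smul_apply, RingHom.id_apply, Subalgebra.smul_def, smul_eq_mul, mul_sub]
    rw [mul_assoc, ← mul_assoc (s i), ← aux_central c (s i), mul_assoc]

lemma aux_key [IsNoetherianRing (Subalgebra.center ℤ A)] [Module.Finite (Subalgebra.center ℤ A) A]
    (I : Ideal (Subalgebra.center ℤ A)) (a : A)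
    (h1 : a * a - a ∈ I • (⊤ : Submodule (Subalgebra.center ℤ A) A))
    (h2 : ∀ x, a * x - x * a ∈ I • (⊤ : Submodule (Subalgebra.center ℤ A) A)) :
    ∃ d ∈ Set.center A, d - a ∈ I • (⊤ : Submodule (Subalgebra.center ℤ A) A) := by
  obtain ⟨m, s, hs⟩ := Module.Finite.exists_fin (R := Subalgebra.center ℤ A) (M := A)
  obtain ⟨k, hk⟩ := I.exists_pow_inf_eq_pow_smul (LinearMap.range (auxComm s))
  obtain ⟨b, hba, -, hbx⟩ := aux_lift I a h1 h2 k
  have hmem : auxComm s b ∈ I ^ (k + 1) • (⊤ : Submodule (Subalgebra.center ℤ A) (Fin m → A)) ⊓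
      LinearMap.range (auxComm s) := ⟨aux_pi _ _ fun i => hbx (s i), ⟨b, rfl⟩⟩
  rw [hk (k + 1) (by omega)] at hmem
  have hmem2 : auxComm s b ∈ I • LinearMap.range (auxComm s) := by
    have := Submodule.smul_mono (le_refl (I ^ (k + 1 - k))) inf_le_right hmem
    simpa using this
  rw [LinearMap.range_eq_map, ← Submodule.map_smul''] at hmem2
  obtain ⟨y, hy, hyb⟩ := hmem2
  refine ⟨b - y, ?_, ?_⟩
  · have h0 : auxComm s (b - y) = 0 := by rw [map_sub, hyb, sub_self]
    have hc : ∀ x, (b - y) * x = x * (b - y) := by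
      intro x
      have hx : x ∈ Submodule.span (Subalgebra.center ℤ A) (Set.range s) := by rw [hs]; trivial
      induction hx using Submodule.span_induction with
      | mem x hx =>
        obtain ⟨i, rfl⟩ := hx
        exact sub_eq_zero.1 (congrFun h0 i)
      | zero => simp
      | add u v _ _ hu hv => rw [mul_add, add_mul, hu, hv]
      | smul c u _ hu =>
        rw [Subalgebra.smul_def, smul_eq_mul, ← mul_assoc, ← aux_central, mul_assoc, hu, mul_assoc]
    exact Semigroup.mem_center_iff.2 fun x => (hc x).symm
  · have : b - y - a = (b - a) - y := by abel
    rw [this]; exact sub_mem hba hy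

lemma aux_ideal (z : TwoSidedIdeal A)
    (hz : ∃ S : Set A, S ⊆ Set.center A ∧ z = TwoSidedIdeal.span S) :
    ∃ I : Ideal (Subalgebra.center ℤ A), ∀ x, x ∈ z ↔
      x ∈ I • (⊤ : Submodule (Subalgebra.center ℤ A) A) := by
  obtain ⟨S, hS, rfl⟩ := hz
  refine ⟨Ideal.span {c | (c : A) ∈ S}, fun x => ⟨fun hx => ?_, fun hx => ?_⟩⟩
  · rw [TwoSidedIdeal.mem_span_iff] at hx
    have := hx (TwoSidedIdeal.mk' (((Ideal.span {c : Subalgebra.center ℤ A | (c : A) ∈ S}) •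
        (⊤ : Submodule (Subalgebra.center ℤ A) A) : Submodule _ A) : Set A) (zero_mem _)
        (fun h h' => add_mem h h') (fun h => neg_mem h)
        (fun h => aux_mul_left _ _ _ h) (fun h => aux_mul_right _ _ _ h)) ?_
    · simpa using this
    · intro c hc
      have hc' : c ∈ Subalgebra.center ℤ A := hS hc
      simp only [SetLike.mem_coe, TwoSidedIdeal.mem_mk']
      have : c = (⟨c, hc'⟩ : Subalgebra.center ℤ A) • (1 : A) := by
        rw [Subalgebra.smul_def]; simp
      rw [this]
      exact Submodule.smul_mem_smul (Ideal.subset_span hc) trivial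
  · induction hx using Submodule.smul_induction_on' with
    | smul c hc b hb =>
      rw [Subalgebra.smul_def, smul_eq_mul]
      apply TwoSidedIdeal.mul_mem_right
      induction hc using Submodule.span_induction with
      | mem x hx => exact TwoSidedIdeal.subset_span hx
      | zero => simp
      | add u v _ _ hu hv => exact add_mem hu hv
      | smul c u _ hu => exact TwoSidedIdeal.mul_mem_left _ _ _ hu
    | add a ha b hb h1 h2 => exact add_mem h1 h2

end Helpers

/-- **Müller's theorem** (`mueller_theorem_idempotents`). -/
theorem stmt8 (A : Type u) [Ring A]
    [IsNoetherianRing (Subalgebra.center ℤ A)] [Module.Finite (Subalgebra.center ℤ A) A]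
    (z : TwoSidedIdeal A) (hz : ∃ S : Set A, S ⊆ Set.center A ∧ z = TwoSidedIdeal.span S)
    (hdim : ∀ P Q : TwoSidedIdeal z.ringCon.Quotient,
      P.IsPrimeIdeal → Q.IsPrimeIdeal → ¬ P < Q) :
    {e : z.ringCon.Quotient |
        IsBlockIdemOn (⇑(RingCon.mk' z.ringCon) '' Set.center A) e} =
      {e : z.ringCon.Quotient | IsBlockIdem e} := by
  obtain ⟨I, hI⟩ := aux_ideal z hz
  have hq : ∀ a b : A, RingCon.mk' z.ringCon a = RingCon.mk' z.ringCon b ↔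
      a - b ∈ I • (⊤ : Submodule (Subalgebra.center ℤ A) A) := by
    intro a b
    rw [← hI, ← TwoSidedIdeal.rel_iff]
    exact RingCon.eq _
  have hsurj : Function.Surjective (RingCon.mk' z.ringCon) := RingCon.mk'_surjective _
  have hcen : ∀ f ∈ RingCon.mk' z.ringCon '' Set.center A, ∀ x, f * x = x * f := by
    rintro _ ⟨c, hc, rfl⟩ x
    obtain ⟨x, rfl⟩ := hsurj x
    rw [← map_mul, ← map_mul, Semigroup.mem_center_iff.1 hc x]
  have key : ∀ e : z.ringCon.Quotient, IsIdempotentElem e → (∀ x, e * x = x * e) →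
      e ∈ RingCon.mk' z.ringCon '' Set.center A := by
    intro e he hc
    obtain ⟨a, rfl⟩ := hsurj e
    obtain ⟨d, hd, hda⟩ := aux_key I a
      (by rw [← hq, map_mul]; exact he)
      (by intro x; rw [← hq, map_mul, map_mul]; exact hc _)
    exact ⟨d, hd, (hq _ _).2 hda⟩
  ext e
  simp only [Set.mem_ofPred_eq, IsBlockIdem, IsBlockIdemOn, Set.mem_univ, true_and, true_imp_iff,
    forall_const]
  constructor
  · rintro ⟨h1, h2, h3, h4, h5⟩
    refine ⟨h2, h3, hcen e h1, fun f g hf hg hfi hgi => ?_⟩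
    exact h5 f g (key f hfi hf) (key g hgi hg) (fun x _ => hf x) (fun x _ => hg x) hfi hgi
  · rintro ⟨h2, h3, h4, h5⟩
    refine ⟨key e h2 h4, h2, h3, fun x _ => h4 x, fun f g hf hg _ _ hfi hgi => ?_⟩
    exact h5 f g (hcen f hf) (hcen g hg) hfi hgi
end

section
/- Let R be a noetherian integral domain, let A be a finite flat R-algebra with center Z, and let p ∈ Spec(R). Let Z(p) := Z_p/p_pZ_p and let Z_p(A) := (Z_p + p_pA_p)/p_pA_p be the image of Z_p under the quotient map A_p → A(p) = A_p/p_pA_p. Then the canonical surjection φ_p: Z(p) → Z_p(A) is block bijective; in particular, no nonzero idempotent of Z(p) lies in the kernel of φ_p. -/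
open TensorProduct

noncomputable abbrev resFieldAt (R : Type*) [CommRing R] (p : PrimeSpectrum R) :=
  IsLocalRing.ResidueField (Localization.AtPrime p.asIdeal)

section Aux

theorem aux_inj {Z B : Type*} [CommRing Z] [Ring B] (φ : Z →+* B)
    (h : ∀ x ∈ RingHom.ker φ, IsNilpotent x) {e f : Z} (he : IsIdempotentElem e)
    (hf : IsIdempotentElem f) (hef : φ e = φ f) : e = f := by
  refine eq_of_isNilpotent_sub_of_isIdempotentElem he hf (h _ ?_)
  rw [RingHom.mem_ker, map_sub, hef, sub_self]

theorem aux_bij {Z B : Type*} [CommRing Z] [Ring B] (φ : Z →+* B)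
    (h : ∀ x ∈ RingHom.ker φ, IsNilpotent x) :
    Set.BijOn φ {e | IsBlockIdem e} {e | IsBlockIdemOn (Set.range φ) e} := by
  have hz : ∀ e : Z, IsIdempotentElem e → φ e = 0 → e = 0 := fun e he h0 =>
    aux_inj φ h he IsIdempotentElem.zero (by rw [h0, map_zero])
  have hc : ∀ z, ∀ x ∈ Set.range φ, φ z * x = x * φ z := by
    rintro z _ ⟨x, rfl⟩
    rw [← map_mul, mul_comm, map_mul]
  refine ⟨?_, ?_, ?_⟩
  · rintro e ⟨-, he, hne, -, hp⟩
    refine ⟨⟨e, rfl⟩, he.map φ, fun h0 => hne (hz e he h0), hc e, ?_⟩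
    intro f g hf hg _ _ hfi hgi hfg hsum
    obtain ⟨f', hf', rfl⟩ := exists_isIdempotentElem_eq_of_ker_isNilpotent φ h f hf hfi
    obtain ⟨g', hg', rfl⟩ := exists_isIdempotentElem_eq_of_ker_isNilpotent φ h g hg hgi
    have h0 : f' * g' = 0 := hz _ (hf'.mul hg') (by rw [map_mul, hfg])
    have hs : IsIdempotentElem (f' + g') := by
      unfold IsIdempotentElem at *
      linear_combination hf' + hg' + 2 * h0
    have hs' : f' + g' = e := aux_inj φ h hs he (by rw [map_add, hsum])
    rcases hp f' g' trivial trivial (fun x _ => mul_comm _ _) (fun x _ => mul_comm _ _)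
      hf' hg' h0 hs' with h1 | h1
    · left; rw [h1, map_zero]
    · right; rw [h1, map_zero]
  · rintro e ⟨-, he, -⟩ f ⟨-, hf, -⟩ hef
    exact aux_inj φ h he hf hef
  · rintro e ⟨her, he, hne, -, hp⟩
    obtain ⟨e', he', rfl⟩ := exists_isIdempotentElem_eq_of_ker_isNilpotent φ h e her he
    refine ⟨e', ⟨trivial, he', fun h0 => hne (by rw [h0, map_zero]),
      fun x _ => mul_comm _ _, ?_⟩, rfl⟩
    intro f g _ _ _ _ hf hg hfg hsum
    rcases hp (φ f) (φ g) ⟨f, rfl⟩ ⟨g, rfl⟩ (hc f) (hc g) (hf.map φ) (hg.map φ)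
      (by rw [← map_mul, hfg, map_zero]) (by rw [← map_add, hsum]) with h1 | h1
    · exact Or.inl (hz f hf h1)
    · exact Or.inr (hz g hg h1)

theorem aux_ker (R : Type*) [CommRing R] (S : Type*) [CommRing S] [IsLocalRing S] [Algebra R S]
    (A : Type*) [Ring A] [Algebra R A]
    (x : S ⊗[R] A)
    (hx : Algebra.TensorProduct.map (IsScalarTower.toAlgHom R S (IsLocalRing.ResidueField S))
      (AlgHom.id R A) x = 0) :
    x ∈ IsLocalRing.maximalIdeal S • (⊤ : Submodule S (S ⊗[R] A)) := by
  let m := IsLocalRing.maximalIdeal S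
  have hex : Function.Exact ((m.subtype).restrictScalars R)
      (IsScalarTower.toAlgHom R S (IsLocalRing.ResidueField S)).toLinearMap := by
    intro y
    constructor
    · intro hy
      exact ⟨⟨y, (IsLocalRing.residue_eq_zero_iff y).1 hy⟩, rfl⟩
    · rintro ⟨y, rfl⟩
      exact (IsLocalRing.residue_eq_zero_iff _).2 y.2
  have h2 := rTensor_exact A hex IsLocalRing.residue_surjective
  obtain ⟨y, rfl⟩ := (h2 x).1 hx
  clear hx
  induction y with
  | zero => simp
  | add a b ha hb => rw [map_add]; exact add_mem ha hb
  | tmul a b =>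
    have : (LinearMap.rTensor A ((m.subtype).restrictScalars R)) (a ⊗ₜ[R] b)
        = (a : S) • ((1 : S) ⊗ₜ[R] b) := by
      simp [TensorProduct.smul_tmul']
    rw [this]
    exact Submodule.smul_mem_smul a.2 trivial

theorem aux_nil (R : Type*) [CommRing R] (S : Type*) [CommRing S] [IsLocalRing S] [Algebra R S]
    [Module.Flat R S] (A : Type*) [Ring A] [Algebra R A] [Module.Finite R A]
    (z : IsLocalRing.ResidueField S ⊗[R] (Subalgebra.center R A))
    (hz : Algebra.TensorProduct.map (AlgHom.id R (IsLocalRing.ResidueField S))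
      (Subalgebra.center R A).val z = 0) : IsNilpotent z := by
  let κ := IsLocalRing.ResidueField S
  let Z := Subalgebra.center R A
  let q : S →ₐ[R] κ := IsScalarTower.toAlgHom R S κ
  let qZ : S ⊗[R] Z →ₐ[S] κ ⊗[R] Z :=
    Algebra.TensorProduct.map (IsScalarTower.toAlgHom S S κ) (AlgHom.id R Z)
  let iS : S ⊗[R] Z →ₐ[S] S ⊗[R] A := Algebra.TensorProduct.map (AlgHom.id S S) Z.val
  have hsurj : Function.Surjective qZ :=
    TensorProduct.map_surjective (g := q.toLinearMap) (g' := LinearMap.id)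
      IsLocalRing.residue_surjective Function.surjective_id
  obtain ⟨x, rfl⟩ := hsurj z
  have hinj : Function.Injective iS :=
    Module.Flat.lTensor_preserves_injective_linearMap (M := S) Z.val.toLinearMap
      Subtype.val_injective
  have hx : iS x ∈ IsLocalRing.maximalIdeal S • (⊤ : Submodule S (S ⊗[R] A)) := by
    apply aux_ker
    rw [← hz]
    clear hz
    induction x with
    | zero => simp
    | add a b ha hb => simp only [map_add, ha, hb]
    | tmul a b => rfl
  have hr : (LinearMap.mulLeft S (iS x)).range ≤
      IsLocalRing.maximalIdeal S • (⊤ : Submodule S (S ⊗[R] A)) := by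
    rintro _ ⟨y, rfl⟩
    have : LinearMap.mulRight S y (iS x) ∈ IsLocalRing.maximalIdeal S • (⊤ : Submodule S (S ⊗[R] A)) := by
      have h1 := Submodule.mem_map_of_mem (f := LinearMap.mulRight S y) hx
      rw [Submodule.map_smul''] at h1
      exact Submodule.smul_mono le_rfl le_top h1
    exact this
  obtain ⟨P, hP, hdeg, hc, hP0⟩ :=
    LinearMap.exists_monic_and_natDegree_eq_and_coeff_mem_pow_and_aeval_eq_zero S
      (LinearMap.mulLeft S (iS x)) _ hr
  have h1 : Polynomial.aeval (iS x) P = 0 := by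
    have h2 : Polynomial.aeval (Algebra.lmul S (S ⊗[R] A) (iS x)) P = 0 := hP0
    rw [Polynomial.aeval_algHom_apply] at h2
    simpa using congrArg (fun f => f 1) h2
  rw [Polynomial.aeval_algHom_apply] at h1
  have h3 : Polynomial.aeval x P = 0 := hinj (by rw [h1, map_zero])
  have h4 : Polynomial.aeval (qZ x) P = 0 := by
    rw [Polynomial.aeval_algHom_apply, h3, map_zero]
  have h5 : P.map (algebraMap S κ) = Polynomial.X ^ P.natDegree := by
    ext k
    rw [Polynomial.coeff_map, Polynomial.coeff_X_pow]
    split_ifs with hk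
    · rw [hk, hP.coeff_natDegree, map_one]
    · rcases lt_or_gt_of_ne hk with hlt | hgt
      · refine (IsLocalRing.residue_eq_zero_iff _).2 ?_
        exact Ideal.pow_le_self (by omega) (hc k)
      · rw [Polynomial.coeff_eq_zero_of_natDegree_lt hgt, map_zero]
  refine ⟨P.natDegree, ?_⟩
  rw [← Polynomial.aeval_map_algebraMap κ, h5] at h4
  simpa using h4

end Aux

/-- **Lemma `center_reduction_block_bijective`.** For a finite flat algebra `A` over a noetherian
domain `R` with center `Z`, the canonical surjection `φ_p : Z(p) = κ(p) ⊗[R] Z → Z_p(A)`, where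
`Z_p(A)` is the image of `Z(p)` in `A(p) = κ(p) ⊗[R] A`, is block bijective; in particular no
nonzero idempotent of `Z(p)` lies in its kernel. -/
theorem stmt10 (R : Type u) [CommRing R] [IsDomain R] [IsNoetherianRing R]
    (A : Type u) [Ring A] [Algebra R A] [Module.Finite R A] [Module.Flat R A]
    (p : PrimeSpectrum R) :
    Set.BijOn
      ⇑(Algebra.TensorProduct.map (AlgHom.id R (resFieldAt R p)) (Subalgebra.center R A).val :
        resFieldAt R p ⊗[R] (Subalgebra.center R A) →ₐ[R] resFieldAt R p ⊗[R] A)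
      {e : resFieldAt R p ⊗[R] (Subalgebra.center R A) | IsBlockIdem e}
      {e : resFieldAt R p ⊗[R] A | IsBlockIdemOn
        (Set.range ⇑(Algebra.TensorProduct.map (AlgHom.id R (resFieldAt R p))
          (Subalgebra.center R A).val :
            resFieldAt R p ⊗[R] (Subalgebra.center R A) →ₐ[R] resFieldAt R p ⊗[R] A)) e} ∧
    ∀ e : resFieldAt R p ⊗[R] (Subalgebra.center R A), IsIdempotentElem e →
      Algebra.TensorProduct.map (AlgHom.id R (resFieldAt R p)) (Subalgebra.center R A).val e = 0 →
      e = 0 := by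
  have h : ∀ x ∈ RingHom.ker (Algebra.TensorProduct.map (AlgHom.id R (resFieldAt R p))
      (Subalgebra.center R A).val :
        resFieldAt R p ⊗[R] (Subalgebra.center R A) →ₐ[R] resFieldAt R p ⊗[R] A).toRingHom,
      IsNilpotent x := fun x hx =>
    aux_nil R (Localization.AtPrime p.asIdeal) A x hx
  exact ⟨aux_bij _ h, fun e he h0 =>
    aux_inj _ h he IsIdempotentElem.zero (h0.trans (map_zero _).symm)⟩
end

section
/- Let φ: R → S be a morphism of commutative rings, let A be an R-algebra such that the induced map φ_A: A → A^S = S ⊗_R A sends every nonzero central idempotent of A to a nonzero element, and let {c_i}_{i∈I} be a finite set of pairwise orthogonal nonzero central idempotents of A with Σ_{i∈I} c_i = 1. Let V be a nonzero A-module belonging to c_i, i.e., c_iV = V and c_jV = 0 for j ≠ i. In each of the following cases, the A^S-module V^S = S ⊗_R V is nonzero and belongs to φ_A(c_i): (a) φ is injective and V is projective as an R-module; (b) φ is faithfully flat; (c) R is local or a principal ideal domain and V is free as an R-module. -/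
open TensorProduct

/-- **Lemma `block_extension_compatibility`.** Let `φ : R → S` be a morphism of commutative
rings, `A` an `R`-algebra such that `A → A^S = S ⊗[R] A` kills no nonzero central idempotent,
`{c i}` a finite complete set of pairwise orthogonal nonzero central idempotents of `A`, and `V`
a nonzero `A`-module belonging to `c i₀`. If (a) `φ` is injective and `V` is `R`-projective, or
(b) `φ` is faithfully flat, or (c) `R` is local or a principal ideal domain and `V` is `R`-free,
then `V^S = S ⊗[R] V` is nonzero and belongs to the `φ`-block `φ_A(c i₀)` of `A^S`; here the
action of `φ_A(c j) = 1 ⊗ c j` on `V^S` is the base change of the `R`-linear action of `c j`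
on `V`. -/
theorem stmt15 (R : Type u) [CommRing R] (S : Type u) [CommRing S] [Algebra R S]
    (A : Type u) [Ring A] [Algebra R A]
    (hstable : ∀ c : A, c ∈ Set.center A → IsIdempotentElem c → c ≠ 0 →
      (Algebra.TensorProduct.includeRight c : S ⊗[R] A) ≠ 0)
    (I : Type u) [Fintype I] (c : I → A)
    (hc : ∀ i, c i ∈ Set.center A ∧ IsIdempotentElem (c i) ∧ c i ≠ 0)
    (horth : ∀ i j, i ≠ j → c i * c j = 0)
    (hsum : ∑ i, c i = 1)
    (V : Type u) [AddCommGroup V] [Module A V] [Module R V] [IsScalarTower R A V] [Nontrivial V]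
    (i₀ : I)
    (hbelongs : (∀ v : V, c i₀ • v = v) ∧ ∀ j, j ≠ i₀ → ∀ v : V, c j • v = 0)
    (hcase :
      (Function.Injective (algebraMap R S) ∧ Module.Projective R V) ∨
      Module.FaithfullyFlat R S ∨
      ((IsLocalRing R ∨ (IsDomain R ∧ IsPrincipalIdealRing R)) ∧ Module.Free R V)) :
    Nontrivial (S ⊗[R] V) ∧
    (∀ x : S ⊗[R] V,
      LinearMap.baseChange S (DistribMulAction.toLinearMap R V (c i₀)) x = x) ∧
    (∀ j, j ≠ i₀ →
      LinearMap.baseChange S (DistribMulAction.toLinearMap R V (c j)) = 0) := by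
  have hS : Nontrivial S := by
    by_contra h
    rw [not_nontrivial_iff_subsingleton] at h
    apply hstable (c i₀) (hc i₀).1 (hc i₀).2.1 (hc i₀).2.2
    have h1 : (Algebra.TensorProduct.includeRight (c i₀) : S ⊗[R] A) = (1 : S) ⊗ₜ[R] c i₀ := rfl
    rw [h1, Subsingleton.elim (1 : S) 0, TensorProduct.zero_tmul]
  refine ⟨?_, ?_, ?_⟩
  · rcases hcase with ⟨hinj, hproj⟩ | hff | ⟨-, hfree⟩
    · have h := Module.Flat.rTensor_preserves_injective_linearMap (M := V)
        (Algebra.linearMap R S) hinj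
      have : Nontrivial (R ⊗[R] V) := (TensorProduct.lid R V).toEquiv.nontrivial
      exact h.nontrivial
    · exact Module.FaithfullyFlat.lTensor_nontrivial R S V
    · let b := Module.Free.chooseBasis R V
      have hne : Nonempty (Module.Free.ChooseBasisIndex R V) := b.index_nonempty
      obtain ⟨k⟩ := hne
      exact ⟨⟨_, 0, (b.baseChange S).ne_zero k⟩⟩
  · intro x
    have h : DistribMulAction.toLinearMap R V (c i₀) = LinearMap.id := by
      ext v; exact hbelongs.1 v
    rw [h, LinearMap.baseChange_id]; rfl
  · intro j hj
    have h : DistribMulAction.toLinearMap R V (c j) = 0 := by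
      ext v; exact hbelongs.2 j hj v
    rw [h, LinearMap.baseChange_zero]
end

section
/- Let R be a henselian local (commutative) ring with maximal ideal m and let A be a (not necessarily commutative) R-algebra that is finitely generated as an R-module. Then the quotient map A → A/mA is idempotent surjective: for every idempotent ē of A/mA there exists an idempotent e of A whose image in A/mA is ē. -/
open TensorProduct

open Polynomial in
theorem hens_etale_lift {R : Type u} [CommRing R] [HenselianLocalRing R]
    {S : Type u} [CommRing S] [Algebra R S] [Algebra.Etale R S]
    (φ : S →ₐ[R] IsLocalRing.ResidueField R) :
    ∃ ψ : S →ₐ[R] R, (Algebra.ofId R (IsLocalRing.ResidueField R)).comp ψ = φ := by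
  let Q := RingHom.ker φ.toRingHom
  have hQ : Q.IsPrime := RingHom.ker_isPrime _
  obtain ⟨f, hfQ, hf⟩ := Algebra.IsEtaleAt.exists_isStandardEtale (R := R) Q
  have hfu : IsUnit (φ f) := by
    rw [isUnit_iff_ne_zero]
    exact fun h => hfQ h
  let φ' : Localization.Away f →ₐ[R] IsLocalRing.ResidueField R :=
    IsLocalization.Away.liftAlgHom (f := φ) f hfu
  have hφ' : φ'.comp (IsScalarTower.toAlgHom R S (Localization.Away f)) = φ := by
    ext s
    simp [φ']
  let P : StandardEtalePresentation R (Localization.Away f) := Nonempty.some inferInstance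
  have hm := P.hasMap.map φ'
  have H := (HenselianLocalRing.TFAE R).out 0 1
  obtain ⟨a, ha, ha'⟩ := H.mp inferInstance P.f P.monic_f (φ' P.x) hm.1
    hm.isUnit_derivative_f.ne_zero
  have haM : P.P.HasMap a := by
    refine ⟨by simpa [IsRoot] using ha, ?_⟩
    have h2 := hm.2
    rw [← ha'] at h2
    have h3 : IsUnit (IsLocalRing.residue R (aeval a P.g)) := by
      have : aeval (IsLocalRing.residue R a) P.g = IsLocalRing.residue R (aeval a P.g) := by
        exact aeval_algebraMap_apply (IsLocalRing.ResidueField R) a P.g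
      rwa [← this]
    exact isUnit_of_map_unit (IsLocalRing.residue R) _ h3
  let ψ' : Localization.Away f →ₐ[R] R := (P.P.lift a haM).comp P.equivRing.toAlgHom
  have hψ' : (Algebra.ofId R (IsLocalRing.ResidueField R)).comp ψ' = φ' := by
    apply P.hom_ext
    simp only [ψ', AlgHom.comp_apply]
    simp
    exact ha'
  refine ⟨ψ'.comp (IsScalarTower.toAlgHom R S (Localization.Away f)), ?_⟩
  rw [← AlgHom.comp_assoc, hψ', hφ']

open Polynomial in
theorem hens_factor {R : Type u} [CommRing R] [HenselianLocalRing R]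
    (p : R[X]) (hp : p.Monic) (f g : (IsLocalRing.ResidueField R)[X]) (hf : f.Monic)
    (hg : g.Monic) (H : p.map (algebraMap R _) = f * g) (hc : IsCoprime f g) :
    ∃ f' g' : R[X], p = f' * g' ∧ IsCoprime f' g' ∧ f'.map (algebraMap R _) = f ∧
      g'.map (algebraMap R _) = g := by
  have hn : p.natDegree = f.natDegree + g.natDegree := by
    simpa [hf.natDegree_mul hg, hp.natDegree_map] using congr(($H).natDegree)
  let φ := (UniversalCoprimeFactorizationRing.homEquiv (IsLocalRing.ResidueField R)
    f.natDegree g.natDegree hn (.mk p hp rfl)).symm ⟨(.mk f hf rfl, .mk g hg rfl), H.symm, hc⟩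
  obtain ⟨ψ, hψ⟩ := hens_etale_lift φ
  have h1 := UniversalCoprimeFactorizationRing.homEquiv_comp_fst _ _ _ hn _ ψ
    (Algebra.ofId R (IsLocalRing.ResidueField R))
  have h2 := UniversalCoprimeFactorizationRing.homEquiv_comp_snd _ _ _ hn _ ψ
    (Algebra.ofId R (IsLocalRing.ResidueField R))
  rw [hψ] at h1 h2
  simp only [φ, Equiv.apply_symm_apply] at h1 h2
  set q := UniversalCoprimeFactorizationRing.homEquiv R _ _ hn _ ψ
  refine ⟨q.1.1.1, q.1.2.1, ?_, q.2.2, (congrArg Subtype.val h1).symm,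
    (congrArg Subtype.val h2).symm⟩
  rw [q.2.1]
  exact (Polynomial.map_id).symm

/-- **Lemma `semiperfect_std_settings` (henselian case).** If `R` is a henselian local
commutative ring with maximal ideal `m` and `A` is a possibly noncommutative `R`-algebra which
is finitely generated as an `R`-module, then the quotient map `A → A/mA = κ(m) ⊗[R] A` is
idempotent surjective: every idempotent of `A/mA` lifts to an idempotent of `A`. -/
theorem stmt17 (R : Type u) [CommRing R] [HenselianLocalRing R]
    (A : Type u) [Ring A] [Algebra R A] [Module.Finite R A] :
    ∀ f : (R ⧸ IsLocalRing.maximalIdeal R) ⊗[R] A, IsIdempotentElem f →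
      ∃ e : A, IsIdempotentElem e ∧
        (Algebra.TensorProduct.includeRight e : (R ⧸ IsLocalRing.maximalIdeal R) ⊗[R] A) = f := by
  open Polynomial in
  intro f hf
  obtain ⟨a, rfl⟩ := Algebra.TensorProduct.includeRight_surjective A
    (R := R) (S := R ⧸ IsLocalRing.maximalIdeal R) Ideal.Quotient.mk_surjective f
  obtain ⟨p₀, hp₀, hpa₀⟩ := Algebra.IsIntegral.isIntegral (R := R) a
  let π : A →ₐ[R] (R ⧸ IsLocalRing.maximalIdeal R) ⊗[R] A := Algebra.TensorProduct.includeRight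
  change IsIdempotentElem (π a) at hf
  change ∃ e : A, IsIdempotentElem e ∧ π e = π a
  let p : R[X] := X * p₀
  have hp : p.Monic := monic_X.mul hp₀
  have hpa : aeval a p = 0 := by
    simp only [p, map_mul]
    rw [aeval_def a p₀, hpa₀, mul_zero]
  let pb := p.map (algebraMap R (IsLocalRing.ResidueField R))
  have hpb : pb.Monic := hp.map _
  obtain ⟨h, hh, hX⟩ := exists_eq_pow_rootMultiplicity_mul_and_not_dvd pb hpb.ne_zero 0
  have hi : 0 < rootMultiplicity 0 pb := by
    rw [rootMultiplicity_pos hpb.ne_zero]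
    simp [pb, p]
  set i := rootMultiplicity 0 pb
  rw [C_0, sub_zero] at hh hX
  have hhm : h.Monic := (monic_X_pow i).of_mul_monic_left (hh ▸ hpb)
  have hcop : IsCoprime (X ^ i) h :=
    ((irreducible_X.coprime_iff_not_dvd).mpr hX).pow_left
  obtain ⟨g, h', hgh, ⟨u, v, huv⟩, hg, hh'⟩ := hens_factor p hp _ _ (monic_X_pow i) hhm hh hcop
  have hfi : π a ^ i = π a := hf.pow_eq (by lia)
  have hga : π (aeval a g) = π a := by
    rw [← aeval_algHom_apply, ← aeval_map_algebraMap (R ⧸ IsLocalRing.maximalIdeal R)]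
    rw [show g.map (algebraMap R (R ⧸ IsLocalRing.maximalIdeal R)) = X ^ i from hg]
    simpa using hfi
  have comm : ∀ q r : R[X], aeval a q * aeval a r = aeval a r * aeval a q := by
    intro q r
    rw [← map_mul, mul_comm, map_mul]
  have h0 : aeval a g * aeval a h' = 0 := by rw [← map_mul, ← hgh, hpa]
  have h1 : aeval a u * aeval a g + aeval a v * aeval a h' = 1 := by
    simpa using congrArg (aeval a) huv
  have h0' : π a * π (aeval a h') = 0 := by rw [← hga, ← map_mul, h0, map_zero]
  refine ⟨aeval a (u * g), ?_, ?_⟩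
  · have : (u * g) * (u * g) = u * g - p * (u * v) := by
      rw [hgh]; linear_combination (u * g) * huv
    rw [IsIdempotentElem, ← map_mul, this, map_sub, map_mul, map_mul _ p, hpa]
    simp
  · have h2 : π (aeval a u) * π a + π (aeval a v) * π (aeval a h') = 1 := by
      rw [← hga, ← map_mul π, ← map_mul π, ← map_add π, h1, map_one]
    have h3 : π (aeval a h') * π a = 0 := by
      rw [← hga, ← map_mul, comm, h0, map_zero]
    have h4 := congrArg (· * π a) h2
    simp only [add_mul, mul_assoc, h3, mul_zero, add_zero, one_mul] at h4
    rw [hf.eq] at h4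
    rw [map_mul, map_mul, hga, h4]
end
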